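/- Let C be a group system. For a time t' and a subset S ⊆ B^{t'}, define the following-branch set F(S) = {β^{t'+1}(a) : a ∈ C, β^{t'}(a) ∈ S}. Then for every t ∈ ℤ, every k ≥ 0, and every j with 0 ≤ j ≤ k, the shift property holds: F(X_{j−1}^{t+j}·(X_j^{t+j} ∩ Y_{k−j}^{t+j})) = X_j^{t+j+1}·(X_{j+1}^{t+j+1} ∩ Y_{k−j−1}^{t+j+1}). -/

import Mathlib

open scoped Pointwise

namespace GroupSystemPaper

variable {A : ℤ → Type*} [∀ t, Group (A t)]

/-- `C^{t+}` : codewords of the group system `C` that are the identity before time `t`. -/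
def Cplus (C : Subgroup (∀ t, A t)) (t : ℤ) : Subgroup C where
  carrier := {a | ∀ n < t, (a : ∀ s, A s) n = 1}
  one_mem' := by intro n hn; simp
  mul_mem' := by intro a b ha hb n hn; simp [ha n hn, hb n hn]
  inv_mem' := by intro a ha n hn; simp [ha n hn]

/-- `C^{t−}` : codewords of the group system `C` that are the identity from time `t` on. -/
def Cminus (C : Subgroup (∀ t, A t)) (t : ℤ) : Subgroup C where
  carrier := {a | ∀ n, t ≤ n → (a : ∀ s, A s) n = 1}
  one_mem' := by intro n hn; simp
  mul_mem' := by intro a b ha hb n hn; simp [ha n hn, hb n hn]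
  inv_mem' := by intro a ha n hn; simp [ha n hn]

/-- `C^{[t₁,t₂]}` : codewords supported on the interval `[t₁, t₂]`. -/
def Cint (C : Subgroup (∀ t, A t)) (t₁ t₂ : ℤ) : Subgroup C :=
  Cplus C t₁ ⊓ Cminus C (t₂ + 1)

instance Cplus_normal (C : Subgroup (∀ t, A t)) (t : ℤ) : (Cplus C t).Normal := by
  constructor
  intro x hx g n hn
  have h1 : (x : ∀ s, A s) n = 1 := hx n hn
  simp [h1]

instance Cminus_normal (C : Subgroup (∀ t, A t)) (t : ℤ) : (Cminus C t).Normal := by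
  constructor
  intro x hx g n hn
  have h1 : (x : ∀ s, A s) n = 1 := hx n hn
  simp [h1]

instance Cint_normal (C : Subgroup (∀ t, A t)) (t₁ t₂ : ℤ) : (Cint C t₁ t₂).Normal := by
  constructor
  intro x hx g
  rcases Subgroup.mem_inf.mp hx with ⟨h1, h2⟩
  exact Subgroup.mem_inf.mpr
    ⟨(Cplus_normal C t₁).conj_mem _ h1 g, (Cminus_normal C (t₂ + 1)).conj_mem _ h2 g⟩

/-- The normal subgroup `C^{t−}C^{t+}` of `C`. -/
def stateN (C : Subgroup (∀ t, A t)) (t : ℤ) : Subgroup C :=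
  Cminus C t ⊔ Cplus C t

instance stateN_normal (C : Subgroup (∀ t, A t)) (t : ℤ) : (stateN C t).Normal :=
  Subgroup.sup_normal _ _

/-- The canonical state space `Σ^t = C/(C^{t−}C^{t+})`. -/
abbrev State (C : Subgroup (∀ t, A t)) (t : ℤ) : Type _ :=
  ↥C ⧸ stateN C t

/-- The state projection `σ^t : C → Σ^t`. -/
def sigma (C : Subgroup (∀ t, A t)) (t : ℤ) : ↥C →* State C t :=
  QuotientGroup.mk' (stateN C t)

/-- The evaluation homomorphism `χ^t : C → A^t`. -/
def evalHom (C : Subgroup (∀ t, A t)) (t : ℤ) : ↥C →* A t :=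
  (Pi.evalMonoidHom A t).comp C.subtype

/-- The branch homomorphism `β^t : C → Σ^t × A^t × Σ^{t+1}`. -/
def beta (C : Subgroup (∀ t, A t)) (t : ℤ) :
    ↥C →* State C t × A t × State C (t + 1) :=
  (sigma C t).prod ((evalHom C t).prod (sigma C (t + 1)))

/-- The branch group `B^t = β^t(C)`. -/
def Branch (C : Subgroup (∀ t, A t)) (t : ℤ) :
    Subgroup (State C t × A t × State C (t + 1)) :=
  (beta C t).range

/-- `β^t` with codomain restricted to the branch group `B^t`. -/
def betaRes (C : Subgroup (∀ t, A t)) (t : ℤ) : ↥C →* ↥(Branch C t) :=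
  (beta C t).rangeRestrict

/-- `X_j^t = β^t(C^{(t−j)+})` as a subgroup of the branch group `B^t`. -/
def X (C : Subgroup (∀ t, A t)) (j t : ℤ) : Subgroup ↥(Branch C t) :=
  (Cplus C (t - j)).map (betaRes C t)

/-- `Y_i^t = β^t(C^{(t+i+1)−})` as a subgroup of the branch group `B^t`. -/
def Y (C : Subgroup (∀ t, A t)) (i t : ℤ) : Subgroup ↥(Branch C t) :=
  (Cminus C (t + i + 1)).map (betaRes C t)

instance X_normal (C : Subgroup (∀ t, A t)) (j t : ℤ) : (X C j t).Normal :=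
  (Cplus_normal C (t - j)).map _ (MonoidHom.rangeRestrict_surjective _)

instance Y_normal (C : Subgroup (∀ t, A t)) (i t : ℤ) : (Y C i t).Normal :=
  (Cminus_normal C (t + i + 1)).map _ (MonoidHom.rangeRestrict_surjective _)

/-- `Δ_k^t = X_0^t ∩ Y_k^t`. -/
def Del (C : Subgroup (∀ t, A t)) (k t : ℤ) : Subgroup ↥(Branch C t) :=
  X C 0 t ⊓ Y C k t

/-- `D_k^t = {a ∈ C : β^t(a) ∈ Δ_k^t}`. -/
def D (C : Subgroup (∀ t, A t)) (k t : ℤ) : Subgroup ↥C :=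
  (Del C k t).comap (betaRes C t)

/-- Following-branch operator: for `S ⊆ B^{t₁}`,
`FSet C t₁ t₂ S = {β^{t₂}(a) : a ∈ C, β^{t₁}(a) ∈ S}`. -/
def FSet (C : Subgroup (∀ t, A t)) (t₁ t₂ : ℤ) (S : Set ↥(Branch C t₁)) :
    Set ↥(Branch C t₂) :=
  {x | ∃ a : ↥C, betaRes C t₁ a ∈ S ∧ betaRes C t₂ a = x}

/-- `π^{[t,t+k]} : C → B^t × ⋯ × B^{t+k}`, `a ↦ (β^t(a), …, β^{t+k}(a))`. -/
def piSeg (C : Subgroup (∀ t, A t)) (t : ℤ) (k : ℕ) :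
    ↥C →* ∀ j : Fin (k + 1), ↥(Branch C (t + ((j : ℕ) : ℤ))) where
  toFun a := fun j => betaRes C (t + ((j : ℕ) : ℤ)) a
  map_one' := by funext j; simp
  map_mul' a b := by funext j; simp

/-- `π^{[t,t+k]}(D_m^t)`. -/
def Pseg (C : Subgroup (∀ t, A t)) (t : ℤ) (k : ℕ) (m : ℤ) :
    Subgroup (∀ j : Fin (k + 1), ↥(Branch C (t + ((j : ℕ) : ℤ)))) :=
  (D C m t).map (piSeg C t k)

/-- `β^{t+j}(D_m^t)` : the image of `D_m^t` in the branch group at time `t + j`. -/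
def Qb (C : Subgroup (∀ t, A t)) (t m j : ℤ) : Subgroup ↥(Branch C (t + j)) :=
  (D C m t).map (betaRes C (t + j))

/-- The normal subgroup `C^{[t,t+k−1]}C^{[t+1,t+k]}` of `C` (denominator of the granule). -/
def granN (C : Subgroup (∀ t, A t)) (t : ℤ) (k : ℕ) : Subgroup ↥C :=
  Cint C t (t + k - 1) ⊔ Cint C (t + 1) (t + k)

instance granN_normal (C : Subgroup (∀ t, A t)) (t : ℤ) (k : ℕ) : (granN C t k).Normal :=
  Subgroup.sup_normal _ _

lemma mem_D_of_mem_Cint (C : Subgroup (∀ t, A t)) (t : ℤ) (k : ℕ) {a : ↥C}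
    (ha : a ∈ Cint C t (t + k)) : a ∈ D C (k : ℤ) t := by
  rcases Subgroup.mem_inf.mp ha with ⟨h1, h2⟩
  refine Subgroup.mem_comap.mpr (Subgroup.mem_inf.mpr ⟨?_, ?_⟩)
  · exact Subgroup.mem_map.mpr ⟨a, by simpa using h1, rfl⟩
  · exact Subgroup.mem_map.mpr ⟨a, h2, rfl⟩

/-- `ℓ`-controllability of the group system `C`. -/
def Controllable (C : Subgroup (∀ t, A t)) (ℓ : ℕ) : Prop :=
  ∀ a b : ↥C, ∀ t : ℤ, ∃ c : ↥C,
    (∀ n < t, (c : ∀ s, A s) n = (a : ∀ s, A s) n) ∧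
    (∀ n, t + (ℓ : ℤ) ≤ n → (c : ∀ s, A s) n = (b : ∀ s, A s) n)

/-
The kernel of `β^t` is `C^{(t+1)+} C^{t−}`, and this gives `X_j^t ∩ Y_i^t = β^t(C^{[t−j,t+i]})`.
Indeed, if `β^t(p) = β^t(m)` with `p ∈ C^{(t−j)+}` and `m ∈ C^{(t+i+1)−}`, then `p⁻¹ m = q n` with
`q ∈ C^{(t+1)+}` and `n ∈ C^{t−}`, and `p q = m n⁻¹` is a preimage supported on `[t−j, t+i]`, unless
one of `X_j^t`, `Y_i^t` is already trivial. So `X_{j−1}^t (X_j^t ∩ Y_i^t)` and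
`X_j^{t+1} (X_{j+1}^{t+1} ∩ Y_{i−1}^{t+1})` are the images under `β^t` and `β^{t+1}` of the same
subgroup `H = C^{(t−j+1)+} C^{[t−j,t+i]}`. Now `F(β^t(H)) = β^{t+1}(H ker β^t)`, and for `0 ≤ j` the
kernel contributes nothing, because `C^{(t+1)+} ≤ H` and `β^{t+1}` kills `C^{t−}`.
-/

lemma map_inf_map_of_ker_le {G G' : Type*} [Group G] [Group G'] (f : G →* G')
    {H K : Subgroup G} [K.Normal] (hker : f.ker ≤ (f.ker ⊓ H) ⊔ K) :
    H.map f ⊓ K.map f = (H ⊓ K).map f := by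
  refine le_antisymm ?_ (Subgroup.map_inf_le H K f)
  rintro _ ⟨⟨h, hh, rfl⟩, k, hk, hkh⟩
  obtain ⟨q, ⟨hq_ker, hqH⟩, n, hn, hqn : q * n = h⁻¹ * k⟩ :=
    Subgroup.mem_sup_of_normal_right.mp (hker (f.eq_iff.mp hkh))
  have hq_eq : h * q = k * n⁻¹ := by
    rw [eq_mul_inv_iff_mul_eq, mul_assoc, hqn, mul_inv_cancel_left]
  have hqK : h * q ∈ K := hq_eq ▸ K.mul_mem hk (K.inv_mem hn)
  exact ⟨h * q, ⟨H.mul_mem hh hqH, hqK⟩, by rw [map_mul, f.mem_ker.mp hq_ker, mul_one]⟩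

section GroupSystem

variable (C : Subgroup (∀ t, A t))

lemma Cplus_antitone : Antitone (Cplus C) :=
  fun _ _ hst _ ha n hn => ha n (hn.trans_le hst)

lemma Cminus_monotone : Monotone (Cminus C) :=
  fun _ _ hst _ ha n hn => ha n (hst.trans hn)

lemma Cminus_le_ker_evalHom (t : ℤ) : Cminus C t ≤ (evalHom C t).ker :=
  fun _ ha => ha t le_rfl

lemma Cplus_inf_ker_evalHom (t : ℤ) : Cplus C t ⊓ (evalHom C t).ker = Cplus C (t + 1) := by
  apply le_antisymm
  · rintro a ⟨ha, ha_eval⟩ n hn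
    rcases (Int.lt_add_one_iff.mp hn).lt_or_eq with hlt | rfl
    · exact ha n hlt
    · exact ha_eval
  · exact fun a ha => ⟨Cplus_antitone C (Int.le_add_one le_rfl) ha, ha t (lt_add_one t)⟩

lemma ker_betaRes_eq_inf (t : ℤ) :
    (betaRes C t).ker = stateN C t ⊓ ((evalHom C t).ker ⊓ stateN C (t + 1)) := by
  have ker_eq : (betaRes C t).ker = (beta C t).ker := MonoidHom.ker_rangeRestrict (beta C t)
  simp only [ker_eq, beta, sigma, MonoidHom.ker_prod, QuotientGroup.ker_mk']

lemma ker_betaRes (t : ℤ) : (betaRes C t).ker = Cplus C (t + 1) ⊔ Cminus C t := by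
  rw [ker_betaRes_eq_inf, ← Cplus_inf_ker_evalHom]
  apply le_antisymm
  · rintro _ ⟨ha, ha_eval, -⟩
    obtain ⟨m, hm, p, hp, rfl⟩ := Subgroup.mem_sup_of_normal_left.mp ha
    have hp_eval : p ∈ (evalHom C t).ker :=
      (Subgroup.mul_mem_cancel_left _ (Cminus_le_ker_evalHom C t hm)).mp ha_eval
    exact mul_mem (Subgroup.mem_sup_right hm) (Subgroup.mem_sup_left ⟨hp, hp_eval⟩)
  · refine sup_le (le_inf ?_ (le_inf inf_le_right ?_)) (le_inf le_sup_left (le_inf ?_ ?_))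
    · exact inf_le_left.trans le_sup_right
    · exact (Cplus_inf_ker_evalHom C t).le.trans le_sup_right
    · exact Cminus_le_ker_evalHom C t
    · exact (Cminus_monotone C (Int.le_add_one le_rfl)).trans le_sup_left

lemma map_betaRes_Cplus_eq_bot {t u : ℤ} (hu : t + 1 ≤ u) :
    (Cplus C u).map (betaRes C t) = ⊥ := by
  rw [Subgroup.map_eq_bot_iff, ker_betaRes]
  exact (Cplus_antitone C hu).trans le_sup_left

lemma map_betaRes_Cminus_eq_bot {t u : ℤ} (hu : u ≤ t) :
    (Cminus C u).map (betaRes C t) = ⊥ := by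
  rw [Subgroup.map_eq_bot_iff, ker_betaRes]
  exact (Cminus_monotone C hu).trans le_sup_right

lemma map_betaRes_Cplus_inf_Cminus (t u v : ℤ) :
    (Cplus C u).map (betaRes C t) ⊓ (Cminus C v).map (betaRes C t) =
      (Cplus C u ⊓ Cminus C v).map (betaRes C t) := by
  have map_inf_le := Subgroup.map_inf_le (Cplus C u) (Cminus C v) (betaRes C t)
  rcases le_total (t + 1) u with hu | hu
  · rw [map_betaRes_Cplus_eq_bot C hu, bot_inf_eq] at map_inf_le ⊢
    exact (le_bot_iff.mp map_inf_le).symm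
  rcases le_total v t with hv | hv
  · rw [map_betaRes_Cminus_eq_bot C hv, inf_bot_eq] at map_inf_le ⊢
    exact (le_bot_iff.mp map_inf_le).symm
  have Cplus_le : Cplus C (t + 1) ≤ (betaRes C t).ker ⊓ Cplus C u :=
    le_inf (le_sup_left.trans (ker_betaRes C t).ge) (Cplus_antitone C hu)
  exact map_inf_map_of_ker_le (betaRes C t)
    ((ker_betaRes C t).le.trans (sup_le_sup Cplus_le (Cminus_monotone C hv)))

lemma X_inf_Y (i j t : ℤ) :
    X C j t ⊓ Y C i t = (Cint C (t - j) (t + i)).map (betaRes C t) :=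
  map_betaRes_Cplus_inf_Cminus C t (t - j) (t + i + 1)

lemma X_mul_X_inf_Y (i j t : ℤ) :
    (X C (j - 1) t : Set (Branch C t)) * (X C j t ⊓ Y C i t : Subgroup (Branch C t)) =
      (Cplus C (t - j + 1) ⊔ Cint C (t - j) (t + i)).map (betaRes C t) := by
  rw [← Subgroup.normal_mul, X_inf_Y, X, ← Subgroup.map_sup, ← sub_add]

lemma FSet_map_betaRes (s t : ℤ) (H : Subgroup C) :
    FSet C s t (H.map (betaRes C s)) = (H ⊔ (betaRes C s).ker).map (betaRes C t) := by
  rw [← Subgroup.comap_map_eq]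
  rfl

lemma FSet_map_betaRes_of_Cplus_le {t : ℤ} {H : Subgroup C} (hH : Cplus C (t + 1) ≤ H) :
    FSet C t (t + 1) (H.map (betaRes C t)) = H.map (betaRes C (t + 1)) := by
  rw [FSet_map_betaRes, ker_betaRes, ← sup_assoc, sup_eq_left.mpr hH, Subgroup.map_sup,
    map_betaRes_Cminus_eq_bot C (Int.le_add_one le_rfl), sup_bot_eq]

theorem statement12_general (t i : ℤ) {j : ℤ} (hj : 0 ≤ j) :
    FSet C t (t + 1)
        ((X C (j - 1) t : Set (Branch C t)) * (X C j t ⊓ Y C i t : Subgroup (Branch C t))) =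
      (X C j (t + 1) : Set (Branch C (t + 1))) *
        (X C (j + 1) (t + 1) ⊓ Y C (i - 1) (t + 1) : Subgroup (Branch C (t + 1))) := by
  have hH : Cplus C (t + 1) ≤ Cplus C (t - j + 1) ⊔ Cint C (t - j) (t + i) :=
    (Cplus_antitone C (by lia)).trans le_sup_left
  have target := X_mul_X_inf_Y C (i - 1) (j + 1) (t + 1)
  rw [add_sub_cancel_right, add_sub_add_right_eq_sub, add_add_sub_cancel] at target
  rw [X_mul_X_inf_Y, FSet_map_betaRes_of_Cplus_le C hH, target]

end GroupSystem

/-- Shift property of the following-branch operator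
`F(S) = {β^{t'+1}(a) : a ∈ C, β^{t'}(a) ∈ S}`: for `0 ≤ j ≤ k`,
`F(X_{j−1}^{t+j}·(X_j^{t+j} ∩ Y_{k−j}^{t+j})) = X_j^{t+j+1}·(X_{j+1}^{t+j+1} ∩ Y_{k−j−1}^{t+j+1})`. -/
theorem statement12 (C : Subgroup (∀ t, A t)) (t : ℤ) (k : ℕ) (j : ℕ) (hj : j ≤ k) :
    FSet C (t + (j : ℤ)) (t + (j : ℤ) + 1)
        ((X C ((j : ℤ) - 1) (t + (j : ℤ)) : Set ↥(Branch C (t + (j : ℤ)))) *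
          ((X C (j : ℤ) (t + (j : ℤ)) ⊓ Y C ((k : ℤ) - (j : ℤ)) (t + (j : ℤ)) :
              Subgroup ↥(Branch C (t + (j : ℤ)))) : Set ↥(Branch C (t + (j : ℤ))))) =
      (X C (j : ℤ) (t + (j : ℤ) + 1) : Set ↥(Branch C (t + (j : ℤ) + 1))) *
        ((X C ((j : ℤ) + 1) (t + (j : ℤ) + 1) ⊓
            Y C ((k : ℤ) - (j : ℤ) - 1) (t + (j : ℤ) + 1) :
            Subgroup ↥(Branch C (t + (j : ℤ) + 1))) : Set ↥(Branch C (t + (j : ℤ) + 1))) := by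
  exact statement12_general C (t + j) (k - j) (Int.natCast_nonneg j)

end GroupSystemPaper
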